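/- arXiv:2508.21799 — 3 statements merged into one kernel-verified Lean document; each statement's English description precedes it below -/
import Mathlib

section
/- Let h be a positive integer and let C_{h,1} denote the nilpotent cyclic semigroup ⟨a | a^h = a^{h+1}⟩. A non-balanced identity u = v holds in C_{h,1} if and only if either (a) |u| ≥ h and |v| ≥ h, or (b) con(u) = con(v) and |u| = |v| ≥ h − m, where m is the minimum of min(occ(x,u), occ(x,v)) taken over all letters x with occ(x,u) ≠ occ(x,v). -/
/-!
Write a substitution `φ` as a choice of exponents `φ x = a ^ n x` with `1 ≤ n x ≤ h`. The value
of a word `w` under `φ` is `a ^ min (∑ n x) h`, the sum running over the letters of `w` with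
multiplicity (`lift_val`, `satisfiesId_iff`), and this sum equals `|w| + ∑ₓ occ(x,w) (n x - 1)` (`sum_map_eq`).

If the identity holds and is not long, sending every letter to `a` forces `|u| = |v| < h`; sending
instead one unbalanced letter `x` to `a ^ 2` shows that the different integers `|u| + occ(x,u)` and
`|v| + occ(x,v)` agree once truncated at `h`, so both are at least `h`. This bounds
`unbalMin u v` from below, and it is then positive, so that `con u = con v`.

Conversely, for a uniform identity, either every unbalanced letter goes to `a`, and then the two
sums agree, or some unbalanced letter has exponent at least `2`, and then both sums are at least
`|u| + unbalMin u v ≥ h`.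
-/

/-- Words over the countably infinite alphabet `ℕ`: elements of the free semigroup. -/
abbrev Word : Type := FreeSemigroup ℕ

/-- The list of letters of a word. -/
def Word.toList (w : Word) : List ℕ := w.head :: w.tail

/-- `occ x w`: the number of occurrences of the letter `x` in the word `w`. -/
def occ (x : ℕ) (w : Word) : ℕ := w.toList.count x

/-- `wlen w`: the length of the word `w`. -/
def wlen (w : Word) : ℕ := w.toList.length

/-- `con w`: the content of `w`, i.e. the set of letters occurring in `w`. -/
def con (w : Word) : Set ℕ := {x | x ∈ w.toList}

/-- A semigroup `S` satisfies the identity `u = v` if every substitution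
`φ : ℕ → S` gives both words equal values. -/
def SatisfiesId (S : Type*) [Semigroup S] (u v : Word) : Prop :=
  ∀ φ : ℕ → S, FreeSemigroup.lift φ u = FreeSemigroup.lift φ v

/-- Reduction of exponents in the cyclic semigroup `⟨a ∣ a^h = a^{h+d}⟩`:
`reduce h d e` is the unique `k` with `a^k = a^e`, `1 ≤ k ≤ h + d - 1` (for `e ≥ 1`). -/
def cycReduce (h d e : ℕ) : ℕ := if e < h then e else h + (e - h) % d

/-- The carrier of the finite cyclic semigroup `C_{h,d}`:
the elements `a, a², …, a^{h+d-1}`, encoded by their exponents. -/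
def Cyc (h d : ℕ) : Type := {n : ℕ // 1 ≤ n ∧ n ≤ h + d - 1}

theorem cycReduce_add_left (h d a b : ℕ) :
    cycReduce h d (cycReduce h d a + b) = cycReduce h d (a + b) := by
  unfold cycReduce
  by_cases h1 : a < h
  · simp [h1]
  · rw [if_neg h1, if_neg (by omega : ¬ h + (a - h) % d + b < h),
      if_neg (by omega : ¬ a + b < h)]
    have e1 : h + (a - h) % d + b - h = (a - h) % d + b := by omega
    rw [e1, Nat.mod_add_mod]
    have e2 : a - h + b = a + b - h := by omega
    rw [e2]

/-- `C_{h,d}` is a semigroup: `a^i · a^j = a^{i+j}` if `i + j ≤ h + d - 1`, and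
`a^i · a^j = a^k` with `h ≤ k ≤ h + d - 1`, `k ≡ i + j (mod d)` otherwise. -/
instance Cyc.instSemigroup (h d : ℕ) [Fact (0 < h)] [Fact (0 < d)] : Semigroup (Cyc h d) where
  mul a b := ⟨cycReduce h d (a.1 + b.1), by
    have hh : 0 < h := Fact.out
    have hd : 0 < d := Fact.out
    have ha := a.2; have hb := b.2
    unfold cycReduce
    split_ifs with h1
    · omega
    · have : (a.1 + b.1 - h) % d < d := Nat.mod_lt _ hd
      omega⟩
  mul_assoc a b c := by
    apply Subtype.ext
    show cycReduce h d (cycReduce h d (a.1 + b.1) + c.1)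
        = cycReduce h d (a.1 + cycReduce h d (b.1 + c.1))
    rw [cycReduce_add_left]
    conv_rhs => rw [Nat.add_comm a.1, cycReduce_add_left, Nat.add_comm]
    rw [Nat.add_assoc]

instance : Fact (0 < 1) := ⟨Nat.one_pos⟩

/-- The identity `u = v` is balanced: every letter occurs equally often in `u` and `v`. -/
def BalancedId (u v : Word) : Prop := ∀ x : ℕ, occ x u = occ x v

/-- The identity `u = v` is long with respect to `h`: `|u| ≥ h` and `|v| ≥ h`. -/
def LongId (h : ℕ) (u v : Word) : Prop := h ≤ wlen u ∧ h ≤ wlen v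

/-- The minimum of `min (occ x u) (occ x v)` over all letters `x` unbalanced for `u = v`. -/
noncomputable def unbalMin (u v : Word) : ℕ :=
  sInf {n : ℕ | ∃ x : ℕ, occ x u ≠ occ x v ∧ n = min (occ x u) (occ x v)}

/-- The identity `u = v` is uniform with respect to `h`:
`con(u) = con(v)` and `|u| = |v| ≥ h - m`, where `m = unbalMin u v`. -/
def UniformId (h : ℕ) (u v : Word) : Prop :=
  con u = con v ∧ wlen u = wlen v ∧ h - unbalMin u v ≤ wlen u


/-- The value of a word in `C_{h,1}`: the sum of the exponents of its letters, truncated at `h`. -/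
theorem lift_val (h : ℕ) [Fact (0 < h)] (φ : ℕ → Cyc h 1) (w : Word) :
    (FreeSemigroup.lift φ w).1 = min (w.toList.map fun x => (φ x).1).sum h := by
  have red : ∀ e, cycReduce h 1 e = min e h := by
    intro e
    unfold cycReduce
    split_ifs <;> omega
  have hmul : ∀ a b : Cyc h 1, (a * b).1 = min (a.1 + b.1) h := fun a b => red _
  have key : ∀ (l : List ℕ) (c : Cyc h 1),
      (l.foldl (fun a b => a * φ b) c).1 = min (c.1 + (l.map fun x => (φ x).1).sum) h := by
    intro l
    induction l with
    | nil => intro c; have := c.2; simp; omega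
    | cons b l ih =>
      intro c
      rw [List.foldl_cons, ih, hmul, List.map_cons, List.sum_cons]
      omega
  -- `FreeSemigroup.lift` is by definition this left fold.
  have := key w.tail (φ w.head)
  rw [Word.toList, List.map_cons, List.sum_cons]
  exact this

theorem satisfiesId_iff (h : ℕ) [Fact (0 < h)] (u v : Word) :
    SatisfiesId (Cyc h 1) u v ↔ ∀ n : ℕ → ℕ, (∀ x, 1 ≤ n x ∧ n x ≤ h) →
      min (u.toList.map n).sum h = min (v.toList.map n).sum h := by
  constructor
  · intro hs n hn
    have := congrArg Subtype.val (hs fun x => (⟨n x, hn x⟩ : {k : ℕ // 1 ≤ k ∧ k ≤ h + 1 - 1}))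
    exact (lift_val h _ u).symm.trans (this.trans (lift_val h _ v))
  · intro H φ
    apply Subtype.ext
    rw [lift_val, lift_val]
    exact H (fun x => (φ x).1) fun x => (φ x).2

/-- A sum of positive exponents over the letters of a list is the length of the list plus the
contribution of the excesses over `1`, collected letter by letter; `S` is any finite set of letters
containing those of the list, so that two words can share it. -/
theorem sum_map_eq (n : ℕ → ℕ) (hn : ∀ x, 1 ≤ n x) (S : Finset ℕ) (l : List ℕ)
    (hS : ∀ x ∈ l, x ∈ S) :
    (l.map n).sum = l.length + ∑ x ∈ S, l.count x * (n x - 1) := by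
  induction l with
  | nil => simp
  | cons b l ih =>
    have hb : b ∈ S := hS b (by simp)
    have h1 := hn b
    simp only [List.map_cons, List.sum_cons, List.length_cons, List.count_cons, add_mul,
      Finset.sum_add_distrib]
    rw [ih fun x hx => hS x (List.mem_cons_of_mem _ hx)]
    simp [hb]
    omega

theorem sum_map_ge (n : ℕ → ℕ) (hn : ∀ x, 1 ≤ n x) (x : ℕ) (hx : 2 ≤ n x) (l : List ℕ) :
    l.length + l.count x ≤ (l.map n).sum := by
  induction l with
  | nil => simp
  | cons b l ih =>
    have h1 := hn b
    by_cases hb : b = x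
    · subst hb; simp; omega
    · simp [hb]; omega

theorem sum_map_double (x : ℕ) (l : List ℕ) :
    (l.map fun y => if y = x then 2 else 1).sum = l.length + l.count x := by
  induction l with
  | nil => simp
  | cons b l ih =>
    by_cases hb : b = x
    · subst hb; simp [ih]; omega
    · simp [hb, ih]; omega

theorem con_eq_of_forall (u v : Word)
    (H : ∀ x, occ x u ≠ occ x v → 0 < min (occ x u) (occ x v)) : con u = con v := by
  ext x
  have e : ∀ w : Word, x ∈ con w ↔ 0 < occ x w := fun w => List.count_pos_iff.symm
  rw [e, e]
  have := H x
  omega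

/-- A non-balanced identity `u = v` holds in the nilpotent cyclic semigroup
`C_{h,1} = ⟨a ∣ a^h = a^{h+1}⟩` if and only if it is long or uniform with respect to `h`. -/
theorem identities_of_nilpotent_cyclic_semigroup (h : ℕ) [Fact (0 < h)] (u v : Word)
    (hnb : ¬ BalancedId u v) :
    SatisfiesId (Cyc h 1) u v ↔ LongId h u v ∨ UniformId h u v := by
  have hh : 0 < h := Fact.out
  rw [satisfiesId_iff]
  constructor
  · intro hs
    by_cases hl : LongId h u v
    · exact Or.inl hl
    right
    have hlen : wlen u = wlen v ∧ wlen u < h := by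
      have := hs (fun _ => 1) fun _ => by omega
      simp only [List.map_const', List.sum_replicate, smul_eq_mul, mul_one] at this
      unfold LongId at hl
      unfold wlen at *
      omega
    have hpos : 1 ≤ wlen u := by simp [wlen, Word.toList]
    have hx : ∀ x, occ x u ≠ occ x v → h ≤ wlen u + min (occ x u) (occ x v) := by
      intro x hne
      -- The exponent `2` is admissible: `2 ≤ h` because `1 ≤ |u| < h`.
      have := hs (fun y => if y = x then 2 else 1) fun y => by split_ifs <;> omega
      simp only [sum_map_double] at this
      unfold wlen occ at *
      omega
    refine ⟨con_eq_of_forall u v fun x hne => ?_, hlen.1, ?_⟩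
    · have := hx x hne
      omega
    · unfold BalancedId at hnb
      push Not at hnb
      obtain ⟨x, hne⟩ := hnb
      -- The infimum over the nonempty set of unbalanced letters is attained.
      obtain ⟨y, hy, e⟩ : ∃ y, occ y u ≠ occ y v ∧ unbalMin u v = min (occ y u) (occ y v) :=
        Nat.sInf_mem
          (s := {n : ℕ | ∃ x : ℕ, occ x u ≠ occ x v ∧ n = min (occ x u) (occ x v)}) ⟨_, x, hne, rfl⟩
      have := hx y hy
      omega
  · intro hlu n hn'
    have hn : ∀ x, 1 ≤ n x := fun x => (hn' x).1
    have hS (w : Word) (S : Finset ℕ) := sum_map_eq n hn S w.toList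
    rcases hlu with ⟨hu, hv⟩ | ⟨-, hlen, hm⟩
    · have h1 := hS u u.toList.toFinset (by simp)
      have h2 := hS v v.toList.toFinset (by simp)
      unfold wlen at *
      omega
    · by_cases hc : ∃ x, occ x u ≠ occ x v ∧ 2 ≤ n x
      · obtain ⟨x, hne, h2⟩ := hc
        have hle : unbalMin u v ≤ min (occ x u) (occ x v) := Nat.sInf_le ⟨x, hne, rfl⟩
        have h3 := sum_map_ge n hn x h2 u.toList
        have h4 := sum_map_ge n hn x h2 v.toList
        unfold wlen occ at *
        omega
      · push Not at hc
        rw [hS u (u.toList ++ v.toList).toFinset (by simp +contextual),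
          hS v (u.toList ++ v.toList).toFinset (by simp +contextual)]
        congr 2
        refine Finset.sum_congr rfl fun x _ => ?_
        by_cases hne : occ x u = occ x v
        · unfold occ at hne
          rw [hne]
        · have := hc x hne
          rw [show n x - 1 = 0 by omega, mul_zero, mul_zero]
end

section
/- Let h and d be positive integers with h ≤ d. Every semigroup that satisfies the commutative law xy = yx and the identity Φ_{h,d}: x^d x_1 ⋯ x_h = x_1 ⋯ x_h (with x, x_1, …, x_h distinct letters) also satisfies the identity x^d = y^d (with x, y distinct letters). -/
/-- Left-hand side `xy` of the commutative law, with `x := 0`, `y := 1`. -/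
def commLHS : Word := ⟨0, [1]⟩

/-- Right-hand side `yx` of the commutative law, with `x := 0`, `y := 1`. -/
def commRHS : Word := ⟨1, [0]⟩

/-- Left-hand side `x^d x₁ ⋯ x_h` of the identity `Φ_{h,d}`,
with the distinct letters `x := 0`, `xᵢ := i` for `i = 1, …, h`. -/
def phiLHS (h d : ℕ) : Word := ⟨0, List.replicate (d - 1) 0 ++ (List.range h).map (· + 1)⟩

/-- Right-hand side `x₁ ⋯ x_h` of the identity `Φ_{h,d}`, with `xᵢ := i`. -/
def phiRHS (h : ℕ) : Word := ⟨1, (List.range (h - 1)).map (· + 2)⟩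

/-- In the monoid `WithOne S` the value of a word is an ordinary list product, so the usual lemmas
on powers apply. -/
theorem coe_lift_eq_prod {S : Type*} [Semigroup S] (φ : ℕ → S) (x : ℕ) (l : List ℕ) :
    ((FreeSemigroup.lift φ (⟨x, l⟩ : Word) : S) : WithOne S)
      = ((x :: l).map fun n => (φ n : WithOne S)).prod := by
  have key : ∀ (l : List ℕ) (s : S),
      ((l.foldl (fun r y => r * φ y) s : S) : WithOne S)
        = s * (l.map fun n => (φ n : WithOne S)).prod := by
    intro l
    induction l with
    | nil => intro s; simp
    | cons y l ih => intro s; simp [ih, mul_assoc]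
  simpa [FreeSemigroup.lift_mk_eq_foldl] using key l (φ x)

/-- The specialization `x ↦ a`, `xᵢ ↦ b` of `Φ_{h,d}`, multiplied by `b ^ (d - h)`. -/
theorem pow_mul_pow_of_phi {h d : ℕ} (hh : 0 < h) (hd : 0 < d) (hhd : h ≤ d)
    {S : Type*} [Semigroup S] (hphi : SatisfiesId S (phiLHS h d) (phiRHS h)) (a b : S) :
    (a : WithOne S) ^ d * (b : WithOne S) ^ d = (b : WithOne S) ^ d := by
  obtain ⟨k, rfl⟩ := Nat.exists_eq_add_of_le hhd
  have e := congrArg (fun s : S => (s : WithOne S)) (hphi fun n => if n = 0 then a else b)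
  simp only [phiLHS, phiRHS, coe_lift_eq_prod] at e
  have e' : (a : WithOne S) ^ (h + k) * (b : WithOne S) ^ h = (b : WithOne S) ^ h := by
    obtain ⟨m, hm⟩ : ∃ m, h + k = m + 1 := ⟨h + k - 1, by omega⟩
    obtain ⟨n, rfl⟩ : ∃ n, h = n + 1 := ⟨h - 1, by omega⟩
    rw [hm] at e ⊢
    simpa [Function.comp_def, pow_succ', mul_assoc] using e
  rw [pow_add (b : WithOne S), ← mul_assoc, e']

/-- For `h ≤ d`, every semigroup satisfying the commutative law and `Φ_{h,d}` also
satisfies the identity `x^d = y^d` (with `x := 0`, `y := 1` distinct letters). -/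
theorem equal_powers_of_comm_phi (h d : ℕ) (hh : 0 < h) (hd : 0 < d) (hhd : h ≤ d)
    (S : Type u) [Semigroup S] (hcomm : SatisfiesId S commLHS commRHS)
    (hphi : SatisfiesId S (phiLHS h d) (phiRHS h)) :
    SatisfiesId S (⟨0, List.replicate (d - 1) 0⟩ : Word) ⟨1, List.replicate (d - 1) 1⟩ := by
  intro φ
  have hc : φ 0 * φ 1 = φ 1 * φ 0 := by
    simpa [commLHS, commRHS, FreeSemigroup.lift_mk_eq_foldl] using hcomm φ
  have hc' : Commute (φ 0 : WithOne S) (φ 1 : WithOne S) := by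
    have := congrArg (fun s : S => (s : WithOne S)) hc
    simpa [Commute, SemiconjBy] using this
  have h01 := pow_mul_pow_of_phi hh hd hhd hphi (φ 0) (φ 1)
  have h10 := pow_mul_pow_of_phi hh hd hhd hphi (φ 1) (φ 0)
  apply WithOne.coe_injective
  have hpow : (φ 0 : WithOne S) ^ d = (φ 1 : WithOne S) ^ d := by
    rw [← h10, ← (hc'.pow_pow d d).eq, h01]
  obtain ⟨m, rfl⟩ : ∃ m, d = m + 1 := ⟨d - 1, by omega⟩
  simpa [coe_lift_eq_prod, pow_succ'] using hpow
end

section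
/- Let h and d be positive integers with h > d. Every semigroup that satisfies the commutative law xy = yx and the identity Φ_{h,d}: x^d x_1 ⋯ x_h = x_1 ⋯ x_h (with x, x_1, …, x_h distinct letters) also satisfies the identity y^d x_1 ⋯ x_{h−d} = x^d x_1 ⋯ x_{h−d} (with x, y, x_1, …, x_{h−d} distinct letters). -/
theorem coe_lift {S : Type*} [Semigroup S] (φ : ℕ → S) (a : ℕ) (l : List ℕ) :
    ((FreeSemigroup.lift φ (⟨a, l⟩ : Word) : S) : WithOne S)
      = ((a :: l).map fun i => (φ i : WithOne S)).prod := by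
  have key : ∀ (l : List ℕ) (s : S),
      ((l.foldl (fun x y => x * φ y) s : S) : WithOne S)
        = s * (l.map fun i => (φ i : WithOne S)).prod := by
    intro l
    induction l with
    | nil => intro s; simp
    | cons b l ih => intro s; simp [ih, mul_assoc]
  have e := key l (φ a)
  rw [List.map_cons, List.prod_cons, ← e]
  rfl

/-- Prepending `a^d` does not change a product of `h` elements: this is `Φ_{h,d}` evaluated at
`x := a` and `x₁, …, x_h := l`. -/
theorem phi_list {S : Type*} [Semigroup S] {h d : ℕ} (hh : 0 < h) (hd : 0 < d)
    (hphi : SatisfiesId S (phiLHS h d) (phiRHS h)) (a : S) (l : List S) (hl : l.length = h) :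
    (a : WithOne S) ^ d * (l.map fun s : S => (s : WithOne S)).prod
      = (l.map fun s : S => (s : WithOne S)).prod := by
  have hL : (List.range h).map (fun i => (((a :: l).getD (i + 1) a : S) : WithOne S))
      = l.map fun s : S => (s : WithOne S) := by
    apply List.ext_getElem
    · simp [hl]
    · intro i h1 h2
      have : i < l.length := by simpa using h2
      simp [this]
  have e := congrArg (fun s : S => (s : WithOne S)) (hphi fun n => (a :: l).getD n a)
  simp only [phiLHS, phiRHS, coe_lift] at e
  have hR : 1 :: (List.range (h - 1)).map (· + 2) = (List.range h).map (· + 1) := by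
    obtain ⟨k, rfl⟩ : ∃ k, h = k + 1 := ⟨h - 1, by omega⟩
    simp [List.range_succ_eq_map]
  have hD : (a : WithOne S) ^ d = a * a ^ (d - 1) := by
    rw [← pow_succ', Nat.sub_add_cancel hd]
  rw [hR, List.map_map] at e
  simp only [List.map_cons, List.map_append, List.map_replicate, List.map_map, List.prod_cons,
    List.prod_append, List.prod_replicate] at e
  simp only [Function.comp_def, hL] at e
  rw [hD, mul_assoc]
  exact e

/-- For `h > d`, every semigroup satisfying the commutative law and `Φ_{h,d}` also
satisfies the identity `y^d x₁ ⋯ x_{h-d} = x^d x₁ ⋯ x_{h-d}`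
(with the distinct letters `x := 0`, `y := 1`, `xᵢ := i + 1`). -/
theorem equal_powers_with_tail_of_comm_phi (h d : ℕ) (hh : 0 < h) (hd : 0 < d)
    (hhd : d < h) (S : Type u) [Semigroup S] (hcomm : SatisfiesId S commLHS commRHS)
    (hphi : SatisfiesId S (phiLHS h d) (phiRHS h)) :
    SatisfiesId S
      (⟨1, List.replicate (d - 1) 1 ++ (List.range (h - d)).map (· + 2)⟩ : Word)
      ⟨0, List.replicate (d - 1) 0 ++ (List.range (h - d)).map (· + 2)⟩ := by
  intro φ
  apply WithOne.coe_injective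
  have hc : ∀ a b : S, (a : WithOne S) * b = b * a := by
    intro a b
    have e := congrArg (fun s : S => (s : WithOne S)) (hcomm fun n => if n = 0 then a else b)
    simpa [commLHS, commRHS, coe_lift] using e
  have hD : ∀ a : WithOne S, a * a ^ (d - 1) = a ^ d := fun a => by
    rw [← pow_succ', Nat.sub_add_cancel hd]
  rw [coe_lift, coe_lift]
  simp only [List.map_cons, List.map_append, List.map_replicate, List.map_map, List.prod_cons,
    List.prod_append, List.prod_replicate, ← mul_assoc, hD]
  have key : ∀ a b : S, (a : WithOne S) ^ d * ((b : WithOne S) ^ d *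
      ((List.range (h - d)).map ((fun i => (φ i : WithOne S)) ∘ (· + 2))).prod)
      = (b : WithOne S) ^ d *
      ((List.range (h - d)).map ((fun i => (φ i : WithOne S)) ∘ (· + 2))).prod := by
    intro a b
    have e := phi_list hh hd hphi a
      (List.replicate d b ++ (List.range (h - d)).map fun i => φ (i + 2))
      (by simp; omega)
    simpa only [List.map_append, List.map_replicate, List.map_map, List.prod_append,
      List.prod_replicate, Function.comp_def] using e
  have hcd : (φ 0 : WithOne S) ^ d * (φ 1 : WithOne S) ^ d
      = (φ 1 : WithOne S) ^ d * (φ 0 : WithOne S) ^ d :=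
    (Commute.pow_pow (hc (φ 0) (φ 1)) d d)
  rw [← key (φ 0) (φ 1), ← mul_assoc, hcd, mul_assoc, key (φ 1) (φ 0)]
end
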